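/- Fix 1 ≤ l < m. For g ∈ Z_n^m write g = g' + g'', where g' agrees with g in coordinates 1,…,l and is 0 in coordinates l+1,…,m, and g'' agrees with g in coordinates l+1,…,m and is 0 in coordinates 1,…,l. Then for all g,h ∈ Z_n^m: F_GCA(g,h) = F_GCA(g',h') · F_GCA(g'',h'') · R_GCA(g'',h'). (This scalar identity expresses the decomposition of the generalized Clifford algebra C^{(n)}(q_1,…,q_m) as the braided tensor product of C^{(n)}(q_1,…,q_l) and C^{(n)}(q_{l+1},…,q_m).) -/

import Mathlib

open Finset

/-- The 2-cochain `F_GCA` on `(ℤ/nℤ)^m`. -/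
noncomputable def Fgca {k : Type*} [Field k] (n m : ℕ) (ω : k) (q : Fin m → k)
    (g h : Fin m → ZMod n) : k :=
  ω ^ (∑ i : Fin m, ∑ j : Fin m, if j < i then (g i).val * (h j).val else 0) *
    ∏ i : Fin m, q i ^ (((g i).val + (h i).val) / n)

/-- The braiding `R_GCA` on `(ℤ/nℤ)^m`. -/
noncomputable def Rgca {k : Type*} [Field k] (n m : ℕ) (ω : k)
    (g h : Fin m → ZMod n) : k :=
  ω ^ (∑ i : Fin m, ∑ j : Fin m,
    if j < i then ((g i).val * (h j).val - (g j).val * (h i).val : ℤ) else 0)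

/-- The truncation of `g` to its first `l` coordinates (zero elsewhere). -/
def lowerPart {n m : ℕ} (l : ℕ) (g : Fin m → ZMod n) : Fin m → ZMod n :=
  fun i => if (i : ℕ) < l then g i else 0

/-- The truncation of `g` to its last `m - l` coordinates (zero elsewhere). -/
def upperPart {n m : ℕ} (l : ℕ) (g : Fin m → ZMod n) : Fin m → ZMod n :=
  fun i => if (i : ℕ) < l then 0 else g i

/-!
The logarithm of the `ω`-part of `F_GCA` is the biadditive form `B(a, b) = ∑_{j < i} a_i b_j`, and
the exponent of `R_GCA(g, h)` is `B(g, h) - B(h, g)`. Expanding `B` along `g = g' + g''` and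
`h = h' + h''` leaves the cross terms `B(g', h'')`, which vanishes because no index of the upper
block precedes one of the lower block, and `B(g'', h')`. The latter is the exponent of
`R_GCA(g'', h')`, since `B(h', g'') = 0` for the same reason. The carries `⌊(g_i + h_i)/n⌋` do not
mix coordinates, so they split without a correction term.
-/

/-- The biadditive form `∑_{j < i} a_i b_j`, whose values on canonical representatives are the
exponents of `ω` in `F_GCA`. -/
def strictLowerForm {ι R : Type*} [Fintype ι] [LT ι] [DecidableLT ι]
    [NonUnitalNonAssocSemiring R] (a b : ι → R) : R :=
  ∑ i, ∑ j, if j < i then a i * b j else 0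

section StrictLowerForm

variable {ι R : Type*} [Fintype ι] [LT ι] [DecidableLT ι] [NonUnitalNonAssocSemiring R]

theorem strictLowerForm_add_left (a a' b : ι → R) :
    strictLowerForm (a + a') b = strictLowerForm a b + strictLowerForm a' b := by
  simp only [strictLowerForm, Pi.add_apply, add_mul, ← sum_add_distrib, ite_add_ite, add_zero]

theorem strictLowerForm_add_right (a b b' : ι → R) :
    strictLowerForm a (b + b') = strictLowerForm a b + strictLowerForm a b' := by
  simp only [strictLowerForm, Pi.add_apply, mul_add, ← sum_add_distrib, ite_add_ite, add_zero]

theorem strictLowerForm_eq_zero {a b : ι → R} (h : ∀ i j, j < i → a i = 0 ∨ b j = 0) :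
    strictLowerForm a b = 0 :=
  sum_eq_zero fun i _ => sum_eq_zero fun j _ => ite_eq_right_iff.2 fun hji =>
    (h i j hji).elim (mul_eq_zero_of_left · _) (mul_eq_zero_of_right _)

end StrictLowerForm

section Truncation

variable {n m : ℕ} (l : ℕ)

theorem val_comp_lowerPart_add_val_comp_upperPart (g : Fin m → ZMod n) :
    ZMod.val ∘ lowerPart l g + ZMod.val ∘ upperPart l g = ZMod.val ∘ g := by
  funext i
  by_cases hi : (i : ℕ) < l <;> simp [lowerPart, upperPart, hi]

theorem strictLowerForm_lowerPart_upperPart (g h : Fin m → ZMod n) :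
    strictLowerForm (ZMod.val ∘ lowerPart l g) (ZMod.val ∘ upperPart l h) = 0 := by
  refine strictLowerForm_eq_zero fun i j hji => ?_
  by_cases hi : (i : ℕ) < l
  · have hj : (j : ℕ) < l := (Fin.lt_def.1 hji).trans hi
    exact Or.inr (by simp [upperPart, hj])
  · exact Or.inl (by simp [lowerPart, hi])

theorem strictLowerForm_eq_lowerPart_add_upperPart_add_cross (g h : Fin m → ZMod n) :
    strictLowerForm (ZMod.val ∘ g) (ZMod.val ∘ h) =
      strictLowerForm (ZMod.val ∘ lowerPart l g) (ZMod.val ∘ lowerPart l h) +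
        strictLowerForm (ZMod.val ∘ upperPart l g) (ZMod.val ∘ upperPart l h) +
          strictLowerForm (ZMod.val ∘ upperPart l g) (ZMod.val ∘ lowerPart l h) := by
  rw [← val_comp_lowerPart_add_val_comp_upperPart l g,
    ← val_comp_lowerPart_add_val_comp_upperPart l h, strictLowerForm_add_left,
    strictLowerForm_add_right, strictLowerForm_add_right, strictLowerForm_lowerPart_upperPart]
  ring

theorem prod_pow_carry_eq_lowerPart_mul_upperPart {M : Type*} [CommMonoid M] (q : Fin m → M)
    (g h : Fin m → ZMod n) :
    ∏ i, q i ^ (((g i).val + (h i).val) / n) =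
      (∏ i, q i ^ (((lowerPart l g i).val + (lowerPart l h i).val) / n)) *
        ∏ i, q i ^ (((upperPart l g i).val + (upperPart l h i).val) / n) := by
  rw [← prod_mul_distrib]
  refine prod_congr rfl fun i _ => ?_
  by_cases hi : (i : ℕ) < l <;> simp [lowerPart, upperPart, hi]

end Truncation

section Cochain

variable {k : Type*} [Field k] {n m : ℕ} (ω : k)

theorem Fgca_eq_pow_strictLowerForm_mul_prod (q : Fin m → k) (g h : Fin m → ZMod n) :
    Fgca n m ω q g h = ω ^ strictLowerForm (ZMod.val ∘ g) (ZMod.val ∘ h) *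
      ∏ i, q i ^ (((g i).val + (h i).val) / n) :=
  rfl

theorem Rgca_eq_zpow_strictLowerForm_sub (g h : Fin m → ZMod n) :
    Rgca n m ω g h = ω ^ (((strictLowerForm (ZMod.val ∘ g) (ZMod.val ∘ h) : ℕ) : ℤ) -
      ((strictLowerForm (ZMod.val ∘ h) (ZMod.val ∘ g) : ℕ) : ℤ)) := by
  rw [Rgca]
  congr 1
  simp only [strictLowerForm, Function.comp_apply, Nat.cast_sum, Nat.cast_ite, Nat.cast_mul,
    Nat.cast_zero, ← sum_sub_distrib, ite_sub_ite, sub_zero, mul_comm]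

theorem Rgca_upperPart_lowerPart (l : ℕ) (g h : Fin m → ZMod n) :
    Rgca n m ω (upperPart l g) (lowerPart l h) =
      ω ^ strictLowerForm (ZMod.val ∘ upperPart l g) (ZMod.val ∘ lowerPart l h) := by
  rw [Rgca_eq_zpow_strictLowerForm_sub, strictLowerForm_lowerPart_upperPart, Nat.cast_zero,
    sub_zero, zpow_natCast]

theorem Fgca_decomposition_general [NeZero n] (l : ℕ) (q : Fin m → k) (g h : Fin m → ZMod n) :
    Fgca n m ω q g h =
      Fgca n m ω q (lowerPart l g) (lowerPart l h) *
        Fgca n m ω q (upperPart l g) (upperPart l h) *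
          Rgca n m ω (upperPart l g) (lowerPart l h) := by
  rw [Rgca_upperPart_lowerPart]
  simp only [Fgca_eq_pow_strictLowerForm_mul_prod]
  rw [strictLowerForm_eq_lowerPart_add_upperPart_add_cross l g h, pow_add, pow_add,
    prod_pow_carry_eq_lowerPart_mul_upperPart l q g h]
  ring

end Cochain

/-- The scalar identity expressing the decomposition of the generalized Clifford
algebra `C^{(n)}(q_1,…,q_m)` as the braided tensor product of
`C^{(n)}(q_1,…,q_l)` and `C^{(n)}(q_{l+1},…,q_m)`:
`F_GCA(g,h) = F_GCA(g',h') · F_GCA(g'',h'') · R_GCA(g'',h')`. -/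
theorem Fgca_decomposition {k : Type*} [Field k] (n m l : ℕ)
    (hn : 2 ≤ n) (hm : 1 ≤ m) (hl : 1 ≤ l) (hlm : l < m) (hchar : (n : k) ≠ 0)
    (ω : k) (hω : IsPrimitiveRoot ω n) (q : Fin m → k) (hq : ∀ i, q i ≠ 0) :
    ∀ g h : Fin m → ZMod n,
      Fgca n m ω q g h =
        Fgca n m ω q (lowerPart l g) (lowerPart l h) *
          Fgca n m ω q (upperPart l g) (upperPart l h) *
            Rgca n m ω (upperPart l g) (lowerPart l h) := by
  have : NeZero n := ⟨by omega⟩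
  exact Fgca_decomposition_general ω l q
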